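/- arXiv:2407.10478 — 5 statements merged into one kernel-verified Lean document; each statement's English description precedes it below -/
import Mathlib

section
/- Let H₀ be a real diagonal matrix in Σ_k (2 ≤ k < n) and let H ∈ V₀ have the unique exact Schrieffer–Wolff decomposition H = exp(iS)·B̃·exp(−iS) (S Hermitian block off-diagonal, B̃ Hermitian block diagonal, the first k columns of exp(iS) spanning the sum of the eigenspaces of H for its lowest k eigenvalues), and assume λ_k(H) < λ_{k+1}(H). Let B̃' be obtained from B̃ by replacing its upper-left k×k block by (τ/k)·I_k, where τ is the trace of that block. Then exp(iS)·B̃'·exp(−iS) = H_Σ, i.e., the projection obtained by omitting the effective Hamiltonian from the Schrieffer–Wolff decomposition coincides with the matrix obtained from H by collapsing its lowest k eigenvalues to their mean. -/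
open Matrix

noncomputable section

/-- Sorted eigenvalues (increasing, counted with multiplicity) of a Hermitian matrix
(junk value for non-Hermitian matrices). -/
def eigs {n : ℕ} (H : Matrix (Fin n) (Fin n) ℂ) : Fin n → ℝ :=
  if hH : H.IsHermitian then hH.eigenvalues ∘ Tuple.sort hH.eigenvalues else fun _ => 0

/-- Mean of the lowest k eigenvalues. -/
def lamBar {n : ℕ} (k : ℕ) (H : Matrix (Fin n) (Fin n) ℂ) : ℝ :=
  (∑ j : Fin n, if (j : ℕ) < k then eigs H j else 0) / k

/-- `Λ_Σ`: the diagonal of sorted eigenvalues, with the lowest k entries replaced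
by their mean. -/
def LambdaSigma {n : ℕ} (k : ℕ) (H : Matrix (Fin n) (Fin n) ℂ) : Matrix (Fin n) (Fin n) ℂ :=
  Matrix.diagonal fun i => if (i : ℕ) < k then (lamBar k H : ℂ) else (eigs H i : ℂ)

/-- Block diagonal w.r.t. the k-split. -/
def BlockDiag {n : ℕ} (k : ℕ) (M : Matrix (Fin n) (Fin n) ℂ) : Prop :=
  ∀ a b : Fin n, ¬(((a : ℕ) < k) ↔ ((b : ℕ) < k)) → M a b = 0

/-- Block off-diagonal w.r.t. the k-split. -/
def BlockOffDiag {n : ℕ} (k : ℕ) (M : Matrix (Fin n) (Fin n) ℂ) : Prop :=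
  ∀ a b : Fin n, (((a : ℕ) < k) ↔ ((b : ℕ) < k)) → M a b = 0

/-- Span of the first k columns of a matrix U. -/
def colSpanFirst {n : ℕ} (k : ℕ) (U : Matrix (Fin n) (Fin n) ℂ) : Submodule ℂ (Fin n → ℂ) :=
  Submodule.span ℂ {v | ∃ b : Fin n, (b : ℕ) < k ∧ v = fun a => U a b}

/-- Sum of the eigenspaces of H corresponding to its lowest k eigenvalues. -/
def lowSpace {n : ℕ} (k : ℕ) (H : Matrix (Fin n) (Fin n) ℂ) : Submodule ℂ (Fin n → ℂ) :=
  ⨆ (i : Fin n) (_ : (i : ℕ) < k), Module.End.eigenspace H.mulVecLin ((eigs H i : ℝ) : ℂ)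

theorem eigs_mono_aux {n : ℕ} (H : Matrix (Fin n) (Fin n) ℂ) : Monotone (eigs H) := by
  unfold eigs
  split_ifs with h
  · exact Tuple.monotone_sort _
  · exact monotone_const

def P0aux (n k : ℕ) : Matrix (Fin n) (Fin n) ℂ :=
  Matrix.diagonal fun i => if (i : ℕ) < k then 1 else 0

theorem blockDiag_comm_aux {n k : ℕ} (M : Matrix (Fin n) (Fin n) ℂ) (h : BlockDiag k M) :
    M * P0aux n k = P0aux n k * M := by
  ext a b
  have := h a b
  simp only [P0aux, Matrix.mul_diagonal, Matrix.diagonal_mul]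
  by_cases ha : (a : ℕ) < k <;> by_cases hb : (b : ℕ) < k <;> simp only [ha, hb] at this ⊢ <;>
    simp at this ⊢ <;> simp [this]

theorem algebra_aux {n k : ℕ} (W Wi U Ui H B D : Matrix (Fin n) (Fin n) ℂ) (t : ℂ)
    (hWW : Wi * W = 1) (hWW' : W * Wi = 1) (hUU : Ui * U = 1) (hUU' : U * Ui = 1)
    (hH : H = W * B * Wi) (hD : Ui * H * U = D)
    (hX : BlockDiag k (Ui * W)) :
    W * (t • P0aux n k + (1 - P0aux n k) * B) * Wi
      = U * (t • P0aux n k + (1 - P0aux n k) * D) * Ui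
    ∧ (P0aux n k * B).trace = (P0aux n k * D).trace := by
  have hc := blockDiag_comm_aux _ hX
  set P := P0aux n k
  -- W P Wi = U P Ui
  have hWP : W * P = U * P * Ui * W := by
    calc W * P = (U * Ui) * W * P := by rw [hUU', one_mul]
      _ = U * (Ui * W * P) := by simp only [mul_assoc]
      _ = _ := by rw [hc]; simp only [mul_assoc]
  have hWPW : W * P * Wi = U * P * Ui := by
    rw [hWP, mul_assoc, hWW', mul_one]
  have hB : B = Wi * H * W := by
    calc B = (Wi * W) * B * (Wi * W) := by rw [hWW]; simp
      _ = _ := by rw [hH]; simp only [mul_assoc]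
  have h1 : W * (P * B) * Wi = (U * P * Ui) * H := by
    calc W * (P * B) * Wi = (W * P) * (Wi * W) * B * Wi := by rw [hWW]; simp only [mul_assoc, one_mul]
      _ = (W * P * Wi) * (W * B * Wi) := by simp only [mul_assoc]
      _ = _ := by rw [hWPW, hH]
  have h2 : U * (P * D) * Ui = (U * P * Ui) * H := by
    rw [← hD]
    calc U * (P * (Ui * H * U)) * Ui = U * P * Ui * H * (U * Ui) := by simp only [mul_assoc]
      _ = _ := by rw [hUU', mul_one]
  have h3 : U * D * Ui = H := by
    rw [← hD]
    calc U * (Ui * H * U) * Ui = (U * Ui) * H * (U * Ui) := by simp only [mul_assoc]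
      _ = _ := by rw [hUU']; simp
  constructor
  · simp only [mul_add, add_mul, sub_mul, mul_sub, one_mul, h1, h2, h3, ← hH,
      mul_smul_comm, smul_mul_assoc, hWPW]
  · have e1 : (W * (P * B) * Wi).trace = (P * B).trace := by
      rw [Matrix.trace_mul_comm, ← mul_assoc, hWW, one_mul]
    have e2 : (U * (P * D) * Ui).trace = (P * D).trace := by
      rw [Matrix.trace_mul_comm, ← mul_assoc, hUU, one_mul]
    rw [← e1, ← e2, h1, h2]

theorem low_aux {n k : ℕ} (H U : Matrix (Fin n) (Fin n) ℂ)
    (hUU' : U * U⁻¹ = 1)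
    (hD : U⁻¹ * H * U = Matrix.diagonal (fun i => (eigs H i : ℂ)))
    (hgap : ∀ i a : Fin n, (i : ℕ) < k → ¬ (a : ℕ) < k → eigs H i < eigs H a)
    (v : Fin n → ℂ) (hv : v ∈ lowSpace k H) (a : Fin n) (ha : ¬ (a : ℕ) < k) :
    (U⁻¹ *ᵥ v) a = 0 := by
  let K : Submodule ℂ (Fin n → ℂ) := LinearMap.ker ((LinearMap.proj a : (Fin n → ℂ) →ₗ[ℂ] ℂ) ∘ₗ (U⁻¹).mulVecLin)
  have hle : lowSpace k H ≤ K := by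
    refine iSup_le fun i => iSup_le fun hi => ?_
    intro w hw
    rw [Module.End.mem_eigenspace_iff] at hw
    simp only [Matrix.mulVecLin_apply] at hw
    have h1 : (U⁻¹ * H * U) *ᵥ (U⁻¹ *ᵥ w) = (eigs H i : ℂ) • (U⁻¹ *ᵥ w) := by
      rw [Matrix.mulVec_mulVec, mul_assoc, hUU', mul_one, ← Matrix.mulVec_mulVec, hw,
        Matrix.mulVec_smul]
    rw [hD] at h1
    have h2 := congrFun h1 a
    rw [Matrix.mulVec_diagonal] at h2
    simp only [Pi.smul_apply, smul_eq_mul] at h2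
    have h3 : ((eigs H a : ℂ) - eigs H i) * (U⁻¹ *ᵥ w) a = 0 := by rw [sub_mul, h2, sub_self]
    rcases mul_eq_zero.1 h3 with h4 | h4
    · exact absurd (by exact_mod_cast sub_eq_zero.1 h4) (hgap i a hi ha).ne'
    · simpa [K] using h4
  simpa [K] using hle hv

theorem span_aux {n k : ℕ} (W Wi : Matrix (Fin n) (Fin n) ℂ) (hWW : Wi * W = 1)
    (v : Fin n → ℂ) (hv : v ∈ colSpanFirst k W) (a : Fin n) (ha : ¬ (a : ℕ) < k) :
    (Wi *ᵥ v) a = 0 := by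
  let K : Submodule ℂ (Fin n → ℂ) := LinearMap.ker ((LinearMap.proj a : (Fin n → ℂ) →ₗ[ℂ] ℂ) ∘ₗ Wi.mulVecLin)
  have hle : colSpanFirst k W ≤ K := by
    refine Submodule.span_le.2 ?_
    rintro w ⟨b, hb, rfl⟩
    have h1 : (Wi * W) a b = 0 := by
      rw [hWW, Matrix.one_apply_ne]
      rintro rfl
      exact ha hb
    have : (Wi *ᵥ fun a => W a b) a = 0 := h1
    simpa [K] using this
  simpa [K] using hle hv

/-- **Projection to Σ_k:** omitting the effective Hamiltonian from the Schrieffer–Wolff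
decomposition (i.e. replacing the upper-left `k × k` block of `B̃` by `(τ/k)·I_k` where `τ` is
its trace) yields exactly `H_Σ`, the matrix obtained from `H` by collapsing its lowest `k`
eigenvalues to their mean. -/
theorem sw_projection_eq_collapse {n k : ℕ} (hk2 : 2 ≤ k) (hkn : k < n)
    (l : Fin n → ℝ) (hmono : Monotone l)
    (hdeg : ∀ i j : Fin n, (i : ℕ) < k → (j : ℕ) < k → l i = l j)
    (hgapl : ∀ i j : Fin n, (i : ℕ) < k → (j : ℕ) = k → l i < l j)
    (V₀ : Set (Matrix (Fin n) (Fin n) ℂ))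
    (hV₀ : V₀ ∈ nhds (Matrix.diagonal fun i => (l i : ℂ)))
    (H S B : Matrix (Fin n) (Fin n) ℂ) (hHV : H ∈ V₀)
    (hSh : S.IsHermitian) (hSoff : BlockOffDiag k S)
    (hBh : B.IsHermitian) (hBd : BlockDiag k B)
    (hdec : H = NormedSpace.exp (Complex.I • S) * B * NormedSpace.exp (-(Complex.I • S)))
    (hspan : colSpanFirst k (NormedSpace.exp (Complex.I • S)) = lowSpace k H)
    (hgap : eigs H ⟨k - 1, by omega⟩ < eigs H ⟨k, hkn⟩)
    (B' : Matrix (Fin n) (Fin n) ℂ)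
    (hB' : B' = Matrix.of fun a b : Fin n =>
      if (a : ℕ) < k ∧ (b : ℕ) < k then
        (if a = b then (∑ c : Fin n, if (c : ℕ) < k then B c c else 0) / (k : ℂ) else 0)
      else B a b) :
    ∀ U ∈ Matrix.unitaryGroup (Fin n) ℂ,
      U⁻¹ * H * U = Matrix.diagonal (fun i => (eigs H i : ℂ)) →
      NormedSpace.exp (Complex.I • S) * B' * NormedSpace.exp (-(Complex.I • S))
        = U * LambdaSigma k H * U⁻¹ := by
  intro U hU hD
  have hUs : U⁻¹ = star U := Matrix.inv_eq_left_inv (Matrix.mem_unitaryGroup_iff'.1 hU)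
  have hUU : U⁻¹ * U = 1 := by rw [hUs]; exact Matrix.mem_unitaryGroup_iff'.1 hU
  have hUU' : U * U⁻¹ = 1 := by rw [hUs]; exact Matrix.mem_unitaryGroup_iff.1 hU
  have hWs : NormedSpace.exp (-(Complex.I • S)) = (NormedSpace.exp (Complex.I • S))ᴴ := by
    rw [← Matrix.exp_conjTranspose, Matrix.conjTranspose_smul, hSh.eq]
    simp
  have hWinv := Matrix.exp_neg (Complex.I • S)
  have hunit := (Matrix.isUnit_iff_isUnit_det _).1 (Matrix.isUnit_exp (Complex.I • S))
  have hWW : NormedSpace.exp (-(Complex.I • S)) * NormedSpace.exp (Complex.I • S) = 1 := by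
    rw [hWinv]; exact Matrix.nonsing_inv_mul _ hunit
  have hWW' : NormedSpace.exp (Complex.I • S) * NormedSpace.exp (-(Complex.I • S)) = 1 := by
    rw [hWinv]; exact Matrix.mul_nonsing_inv _ hunit
  generalize NormedSpace.exp (-(Complex.I • S)) = Wi at *
  generalize NormedSpace.exp (Complex.I • S) = W at *
  have hgap' : ∀ i a : Fin n, (i : ℕ) < k → ¬ (a : ℕ) < k → eigs H i < eigs H a := by
    intro i a hi ha
    refine lt_of_le_of_lt (eigs_mono_aux H ?_) (lt_of_lt_of_le hgap (eigs_mono_aux H ?_))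
    · rw [Fin.le_def]; simp only; omega
    · rw [Fin.le_def]; simp only; omega
  have hX1 : ∀ a b : Fin n, ¬ (a : ℕ) < k → (b : ℕ) < k → (U⁻¹ * W) a b = 0 := by
    intro a b ha hb
    refine low_aux H U hUU' hD hgap' (fun c => W c b) ?_ a ha
    rw [← hspan]
    exact Submodule.subset_span ⟨b, hb, rfl⟩
  have hX2 : ∀ a b : Fin n, ¬ (a : ℕ) < k → (b : ℕ) < k → (Wi * U) a b = 0 := by
    intro a b ha hb
    refine span_aux W Wi hWW (fun c => U c b) ?_ a ha
    rw [hspan]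
    refine Submodule.mem_iSup_of_mem b (Submodule.mem_iSup_of_mem hb ?_)
    rw [Module.End.mem_eigenspace_iff]
    have h1 : H * U = U * Matrix.diagonal (fun i => (eigs H i : ℂ)) := by
      rw [← hD, ← mul_assoc, ← mul_assoc, hUU', one_mul]
    ext c
    have h2 := congrFun (congrFun h1 c) b
    rw [Matrix.mul_diagonal] at h2
    have h3 : (H *ᵥ fun c => U c b) c = U c b * (eigs H b : ℂ) := h2
    simp only [Matrix.mulVecLin_apply, h3, Pi.smul_apply, smul_eq_mul, mul_comm]
  have hX : BlockDiag k (U⁻¹ * W) := by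
    intro a b hab
    by_cases ha : (a : ℕ) < k
    · have hb : ¬ (b : ℕ) < k := fun hb => hab (by simp [ha, hb])
      have h1 := hX2 b a hb ha
      have h2 : Wi * U = (U⁻¹ * W)ᴴ := by
        rw [Matrix.conjTranspose_mul, hWs, hUs, Matrix.star_eq_conjTranspose,
          Matrix.conjTranspose_conjTranspose]
      rw [h2, Matrix.conjTranspose_apply] at h1
      exact star_eq_zero.1 h1
    · have hb : (b : ℕ) < k := by
        by_contra hb
        exact hab (by simp [ha, hb])
      exact hX1 a b ha hb
  obtain ⟨hmain, htr⟩ := algebra_aux W Wi U U⁻¹ H B _ (lamBar k H : ℂ) hWW hWW' hUU hUU' hdec hD hX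
  have htr' : (∑ c : Fin n, if (c : ℕ) < k then B c c else 0) / (k : ℂ) = (lamBar k H : ℂ) := by
    have e1 : (∑ c : Fin n, if (c : ℕ) < k then B c c else 0) = (P0aux n k * B).trace := by
      simp [Matrix.trace, P0aux, Matrix.diagonal_mul]
    rw [e1, htr]
    simp [Matrix.trace, P0aux, lamBar]
    congr 1
    refine Finset.sum_congr rfl fun c _ => ?_
    split_ifs <;> simp
  have hBeq : B' = (lamBar k H : ℂ) • P0aux n k + (1 - P0aux n k) * B := by
    rw [hB', htr']
    ext a b
    have hab := hBd a b
    simp only [Matrix.of_apply, P0aux, sub_mul, one_mul, Matrix.diagonal_mul,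
      Matrix.diagonal_apply, Matrix.add_apply, Matrix.sub_apply, Matrix.smul_apply, smul_eq_mul]
    by_cases h : a = b
    · subst h
      by_cases ha : (a : ℕ) < k <;> simp [ha]
    · by_cases ha : (a : ℕ) < k
      · by_cases hb : (b : ℕ) < k
        · simp [ha, hb, h]
        · simp [ha, hb, h, hab (by simp [ha, hb])]
      · simp [ha, h]
  have hLeq : LambdaSigma k H = (lamBar k H : ℂ) • P0aux n k
      + (1 - P0aux n k) * Matrix.diagonal (fun i => (eigs H i : ℂ)) := by
    ext a b
    simp only [LambdaSigma, P0aux, sub_mul, one_mul, Matrix.diagonal_mul,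
      Matrix.diagonal_apply, Matrix.add_apply, Matrix.sub_apply, Matrix.smul_apply, smul_eq_mul]
    by_cases h : a = b
    · subst h
      by_cases ha : (a : ℕ) < k <;> simp [ha]
    · simp [h]
  rw [hBeq, hLeq, hmain]

end
end

section
/- Let 2 ≤ k < n and let H ∈ Herm(n) satisfy λ_k(H) < λ_{k+1}(H). Then the Frobenius distance from H to the set Σ_k satisfies d(H, Σ_k) = inf{‖H − G‖ : G ∈ Σ_k} = ‖H − H_Σ‖ = √k · D_k(H). -/
open Matrix

noncomputable section

/-- Frobenius norm of a complex matrix. -/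
def frobNorm {n : ℕ} (M : Matrix (Fin n) (Fin n) ℂ) : ℝ :=
  Real.sqrt (∑ a, ∑ b, ‖M a b‖ ^ 2)

/-- Standard deviation of the lowest k eigenvalues. -/
def Dk {n : ℕ} (k : ℕ) (H : Matrix (Fin n) (Fin n) ℂ) : ℝ :=
  Real.sqrt ((∑ j : Fin n, if (j : ℕ) < k then (eigs H j - lamBar k H) ^ 2 else 0) / k)

/-- The set Σ_k of k-fold ground-state degenerate Hermitian matrices:
λ₁ = … = λ_k < λ_{k+1}. -/
def SigmaSet (n k : ℕ) : Set (Matrix (Fin n) (Fin n) ℂ) :=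
  {H | H.IsHermitian ∧ (∀ i j : Fin n, (i : ℕ) < k → (j : ℕ) < k → eigs H i = eigs H j) ∧
    ∀ i j : Fin n, (i : ℕ) < k → (j : ℕ) = k → eigs H i < eigs H j}

lemma eigs_eq {n : ℕ} {H : Matrix (Fin n) (Fin n) ℂ} (hH : H.IsHermitian) :
    eigs H = hH.eigenvalues ∘ Tuple.sort hH.eigenvalues := by
  simp [eigs, hH]

lemma eigs_mono {n : ℕ} {H : Matrix (Fin n) (Fin n) ℂ} (hH : H.IsHermitian) :
    Monotone (eigs H) := by
  rw [eigs_eq hH]; exact Tuple.monotone_sort _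

lemma frob_sq_trace {n : ℕ} (M : Matrix (Fin n) (Fin n) ℂ) :
    ((∑ a, ∑ b, ‖M a b‖ ^ 2 : ℝ) : ℂ) = (star M * M).trace := by
  rw [Finset.sum_comm]
  simp only [Matrix.trace, Matrix.diag, Matrix.mul_apply, Matrix.star_apply]
  push_cast
  refine Finset.sum_congr rfl fun i _ => Finset.sum_congr rfl fun j _ => ?_
  exact (Complex.conj_mul' _).symm

lemma frob_sq_unitary {n : ℕ} (M U V : Matrix (Fin n) (Fin n) ℂ)
    (hU : star U * U = 1) (hV : V * star V = 1) :
    ∑ a, ∑ b, ‖(U * M * V) a b‖ ^ 2 = ∑ a, ∑ b, ‖M a b‖ ^ 2 := by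
  apply Complex.ofReal_injective
  rw [frob_sq_trace, frob_sq_trace]
  have : star (U * M * V) * (U * M * V) = star V * (star M * M * V) := by
    simp only [star_mul]
    calc _ = star V * (star M * (star U * U) * M * V) := by simp only [mul_assoc]
      _ = _ := by rw [hU, mul_one]
  rw [this, Matrix.trace_mul_comm, mul_assoc, hV, mul_one]

lemma frob_sq_diff {n : ℕ} (a b : Fin n → ℝ) (U V : Matrix (Fin n) (Fin n) ℂ)
    (hU : U * star U = 1) (hU' : star U * U = 1)
    (hV : V * star V = 1) (hV' : star V * V = 1) :
    ∑ i, ∑ j, ‖(U * diagonal (fun i => (a i : ℂ)) * star U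
      - V * diagonal (fun i => (b i : ℂ)) * star V) i j‖ ^ 2 =
    ∑ i, ∑ j, (a i - b j) ^ 2 * ‖(star U * V) i j‖ ^ 2 := by
  rw [← frob_sq_unitary _ (star U) V (by simpa using hU) hV]
  refine Finset.sum_congr rfl fun i _ => Finset.sum_congr rfl fun j _ => ?_
  have : star U * (U * diagonal (fun i => (a i : ℂ)) * star U
      - V * diagonal (fun i => (b i : ℂ)) * star V) * V =
      diagonal (fun i => (a i : ℂ)) * (star U * V) - (star U * V) * diagonal (fun i => (b i : ℂ)) := by
    calc _ = (star U * U) * diagonal (fun i => (a i : ℂ)) * (star U * V)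
          - (star U * V) * diagonal (fun i => (b i : ℂ)) * (star V * V) := by noncomm_ring
      _ = _ := by rw [hU', hV', one_mul, mul_one]
  rw [this, Matrix.sub_apply, Matrix.diagonal_mul, Matrix.mul_diagonal]
  have h2 : (a i : ℂ) * (star U * V) i j - (star U * V) i j * (b j : ℂ)
      = ((a i - b j : ℝ) : ℂ) * (star U * V) i j := by push_cast; ring
  rw [h2, norm_mul, mul_pow, Complex.norm_real, Real.norm_eq_abs, sq_abs]

lemma ds_of_unitary {n : ℕ} (W : Matrix (Fin n) (Fin n) ℂ)
    (h1 : W * star W = 1) (h2 : star W * W = 1) :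
    (Matrix.of fun i j => ‖W i j‖ ^ 2 : Matrix (Fin n) (Fin n) ℝ) ∈ doublyStochastic ℝ (Fin n) := by
  rw [mem_doublyStochastic_iff_sum]
  refine ⟨fun i j => by simp only [Matrix.of_apply]; positivity, fun i => ?_, fun j => ?_⟩
  · have := congrFun (congrFun h1 i) i
    rw [Matrix.mul_apply, Matrix.one_apply_eq] at this
    apply Complex.ofReal_injective
    rw [Complex.ofReal_one, ← this]
    push_cast
    refine Finset.sum_congr rfl fun j _ => ?_
    simp only [Matrix.of_apply, Matrix.star_apply]
    push_cast
    exact (Complex.mul_conj' _).symm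
  · have := congrFun (congrFun h2 j) j
    rw [Matrix.mul_apply, Matrix.one_apply_eq] at this
    apply Complex.ofReal_injective
    rw [Complex.ofReal_one, ← this]
    push_cast
    refine Finset.sum_congr rfl fun i _ => ?_
    simp only [Matrix.of_apply, Matrix.star_apply]
    push_cast
    exact (Complex.conj_mul' _).symm

lemma perm_ineq {n : ℕ} (a c : Fin n → ℝ) (ha : Monotone a) (hc : Monotone c)
    (σ : Equiv.Perm (Fin n)) :
    ∑ i, (a i - c i) ^ 2 ≤ ∑ i, (a i - c (σ i)) ^ 2 := by
  have h := (ha.monovary hc).sum_mul_comp_perm_le_sum_mul (σ := σ)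
  have h2 : ∑ i, c (σ i) ^ 2 = ∑ i, c i ^ 2 := Equiv.sum_comp σ (fun i => c i ^ 2)
  simp only [sub_sq, Finset.sum_add_distrib, Finset.sum_sub_distrib, mul_assoc,
    ← Finset.mul_sum]
  linarith

lemma ds_ineq {n : ℕ} (a c : Fin n → ℝ) (ha : Monotone a) (hc : Monotone c)
    (τ : Equiv.Perm (Fin n)) (P : Matrix (Fin n) (Fin n) ℝ)
    (hP : P ∈ doublyStochastic ℝ (Fin n)) :
    ∑ i, (a i - c i) ^ 2 ≤ ∑ i, ∑ j, (a i - c (τ j)) ^ 2 * P i j := by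
  obtain ⟨w, hw, hw1, rfl⟩ := exists_eq_sum_perm_of_mem_doublyStochastic hP
  have key : ∑ i, ∑ j, (a i - c (τ j)) ^ 2 *
      (∑ σ : Equiv.Perm (Fin n), w σ • σ.permMatrix ℝ) i j
      = ∑ σ : Equiv.Perm (Fin n), w σ * ∑ i, (a i - c (τ (σ i))) ^ 2 := by
    simp only [Matrix.sum_apply, Matrix.smul_apply, smul_eq_mul, Finset.mul_sum]
    simp_rw [Finset.sum_comm (s := (Finset.univ : Finset (Fin n)))
      (t := (Finset.univ : Finset (Equiv.Perm (Fin n))))]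
    refine Finset.sum_congr rfl fun σ _ => Finset.sum_congr rfl fun i _ => ?_
    rw [Finset.sum_eq_single (σ i)]
    · simp [Equiv.Perm.permMatrix, PEquiv.toMatrix_apply]; ring
    · intro j _ hj
      simp [Equiv.Perm.permMatrix, PEquiv.toMatrix_apply, hj.symm]
    · simp
  rw [key]
  calc _ = ∑ σ : Equiv.Perm (Fin n), w σ * ∑ i, (a i - c i) ^ 2 := by
        rw [← Finset.sum_mul, hw1, one_mul]
    _ ≤ _ := Finset.sum_le_sum fun σ _ => mul_le_mul_of_nonneg_left
        (perm_ineq a c ha hc (σ.trans τ)) (hw σ)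

lemma hoffman {n : ℕ} (a : Fin n → ℝ) (ha : Monotone a) (U G : Matrix (Fin n) (Fin n) ℂ)
    (hU : U * star U = 1) (hU' : star U * U = 1) (hG : G.IsHermitian) :
    ∑ i, (a i - eigs G i) ^ 2 ≤
      ∑ i, ∑ j, ‖(U * diagonal (fun i => (a i : ℂ)) * star U - G) i j‖ ^ 2 := by
  obtain ⟨V, hV, hV', hGV⟩ : ∃ V : Matrix (Fin n) (Fin n) ℂ, V * star V = 1 ∧ star V * V = 1 ∧
      G = V * diagonal (fun i => (hG.eigenvalues i : ℂ)) * star V := by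
    refine ⟨hG.eigenvectorUnitary, ?_, ?_, ?_⟩
    · exact Unitary.coe_mul_star_self _
    · exact Unitary.coe_star_mul_self _
    · exact hG.spectral_theorem
  have hb : ∀ j, hG.eigenvalues j = eigs G ((Tuple.sort hG.eigenvalues).symm j) := by
    intro j; rw [eigs_eq hG]; simp
  have h1 : (star U * V) * star (star U * V) = 1 := by
    rw [star_mul, star_star, mul_assoc, ← mul_assoc V, hV, one_mul, hU']
  have h2 : star (star U * V) * (star U * V) = 1 := by
    rw [star_mul, star_star, mul_assoc, ← mul_assoc U, hU, one_mul, hV']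
  have := ds_ineq a (eigs G) ha (eigs_mono hG) (Tuple.sort hG.eigenvalues).symm _
    (ds_of_unitary _ h1 h2)
  refine this.trans (le_of_eq ?_)
  conv_rhs => rw [hGV]
  rw [frob_sq_diff _ _ U V hU hU' hV hV']
  simp only [hb, Matrix.of_apply]

lemma eigs_conj {n : ℕ} (d : Fin n → ℝ) (hd : Monotone d) (U : Matrix (Fin n) (Fin n) ℂ)
    (hU' : star U * U = 1)
    (hM : (U * diagonal (fun i => (d i : ℂ)) * star U).IsHermitian) :
    eigs (U * diagonal (fun i => (d i : ℂ)) * star U) = d := by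
  have h1 := hM.roots_charpoly_eq_eigenvalues
  rw [Matrix.charpoly_mul_comm, ← mul_assoc, hU', one_mul, Matrix.charpoly_diagonal,
    Polynomial.roots_prod _ _ (by simp [Finset.prod_ne_zero_iff, Polynomial.X_sub_C_ne_zero])] at h1
  simp only [Polynomial.roots_X_sub_C, Multiset.bind_singleton] at h1
  have h2 : Multiset.map d Finset.univ.val = Multiset.map hM.eigenvalues Finset.univ.val := by
    apply Multiset.map_injective Complex.ofReal_injective
    rw [Multiset.map_map, Multiset.map_map]
    exact h1
  rw [Fin.univ_val_map, Fin.univ_val_map, Multiset.coe_eq_coe] at h2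
  have h3 : List.Perm (List.ofFn (eigs (U * diagonal (fun i => (d i : ℂ)) * star U)))
      (List.ofFn d) := by
    rw [eigs_eq hM]
    exact ((Tuple.sort hM.eigenvalues).ofFn_comp_perm _).trans h2.symm
  exact List.ofFn_injective (h3.eq_of_pairwise' (eigs_mono hM).sortedLE_ofFn.pairwise
    hd.sortedLE_ofFn.pairwise)

lemma mean_ineq {n k : ℕ} (hk : 0 < k) (hkn : k < n) (a : Fin n → ℝ) (μ : ℝ) :
    ∑ j : Fin n, (if (j : ℕ) < k then
      (a j - (∑ j : Fin n, if (j : ℕ) < k then a j else 0) / k) ^ 2 else 0) ≤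
    ∑ j : Fin n, (if (j : ℕ) < k then (a j - μ) ^ 2 else 0) := by
  set m := (∑ j : Fin n, if (j : ℕ) < k then a j else 0) / k with hm
  have hk' : (k : ℝ) ≠ 0 := by positivity
  have hcard : ∑ j : Fin n, (if (j : ℕ) < k then (1 : ℝ) else 0) = k := by
    rw [Fin.sum_univ_eq_sum_range (fun j => if j < k then (1 : ℝ) else 0) n,
      ← Finset.sum_filter]
    have : (Finset.range n).filter (· < k) = Finset.range k := by ext; simp; omega
    rw [this]; simp
  have hs : (∑ j : Fin n, if (j : ℕ) < k then a j else 0) = k * m := by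
    rw [hm]; field_simp
  have e : ∀ j : Fin n, (if (j : ℕ) < k then (a j - μ) ^ 2 else 0) =
      (if (j : ℕ) < k then (a j - m) ^ 2 else 0) + 2 * (m - μ) * (if (j : ℕ) < k then a j else 0)
       + (μ ^ 2 - m ^ 2) * (if (j : ℕ) < k then (1 : ℝ) else 0) := by
    intro j; split_ifs <;> ring
  rw [Finset.sum_congr rfl fun j _ => e j, Finset.sum_add_distrib, Finset.sum_add_distrib,
    ← Finset.mul_sum, ← Finset.mul_sum, hs, hcard]
  nlinarith [mul_nonneg (Nat.cast_nonneg (α := ℝ) k) (sq_nonneg (m - μ))]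

/-- **Distance from Σ_k (Theorem on the distance):**
`d(H, Σ_k) = inf{‖H−G‖ : G ∈ Σ_k} = ‖H − H_Σ‖ = √k · D_k(H)`. -/
theorem dist_to_SigmaSet {n k : ℕ} (hk2 : 2 ≤ k) (hkn : k < n)
    (H : Matrix (Fin n) (Fin n) ℂ) (hH : H.IsHermitian)
    (hgap : eigs H ⟨k - 1, by omega⟩ < eigs H ⟨k, hkn⟩)
    (U : Matrix (Fin n) (Fin n) ℂ) (hU : U ∈ Matrix.unitaryGroup (Fin n) ℂ)
    (hdiag : U⁻¹ * H * U = Matrix.diagonal fun i => (eigs H i : ℂ)) :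
    sInf ((fun G => frobNorm (H - G)) '' SigmaSet n k)
        = frobNorm (H - U * LambdaSigma k H * U⁻¹) ∧
    sInf ((fun G => frobNorm (H - G)) '' SigmaSet n k) = Real.sqrt k * Dk k H := by
  have hU1 : star U * U = 1 := Matrix.mem_unitaryGroup_iff'.1 hU
  have hU2 : U * star U = 1 := Matrix.mem_unitaryGroup_iff.1 hU
  have hinv : U⁻¹ = star U := Matrix.inv_eq_left_inv hU1
  rw [hinv] at hdiag ⊢
  have hHU : H = U * diagonal (fun i => (eigs H i : ℂ)) * star U := by
    rw [← hdiag]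
    calc H = (U * star U) * H * (U * star U) := by rw [hU2, one_mul, mul_one]
      _ = _ := by simp only [mul_assoc]
  have hmono := eigs_mono hH
  set d : Fin n → ℝ := fun i => if (i : ℕ) < k then lamBar k H else eigs H i with hd
  have hL : LambdaSigma k H = diagonal (fun i => (d i : ℂ)) := by
    unfold LambdaSigma
    congr 1; ext i; simp only [hd]; split_ifs <;> rfl
  have hk0 : (0 : ℝ) < k := by positivity
  have hcard : ∑ j : Fin n, (if (j : ℕ) < k then (1 : ℝ) else 0) = k := by
    rw [Fin.sum_univ_eq_sum_range (fun j => if j < k then (1 : ℝ) else 0) n,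
      ← Finset.sum_filter]
    have : (Finset.range n).filter (· < k) = Finset.range k := by ext; simp; omega
    rw [this]; simp
  have hbar : lamBar k H ≤ eigs H ⟨k - 1, by omega⟩ := by
    unfold lamBar
    rw [div_le_iff₀ hk0, ← hcard, Finset.mul_sum]
    refine Finset.sum_le_sum fun j _ => ?_
    split_ifs with h
    · rw [mul_one]; exact hmono (Fin.mk_le_mk.2 (by omega))
    · simp
  have hge : ∀ j : Fin n, k ≤ (j : ℕ) → lamBar k H < eigs H j := fun j hj =>
    hbar.trans_lt (hgap.trans_le (hmono (Fin.mk_le_mk.2 hj)))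
  have hdm : Monotone d := by
    intro i j hij
    have hij' : (i : ℕ) ≤ j := hij
    simp only [hd]
    split_ifs with h1 h2 h2
    · exact le_rfl
    · exact (hge j (by omega)).le
    · omega
    · exact hmono hij
  have hMh : (U * diagonal (fun i => (d i : ℂ)) * star U).IsHermitian := by
    have : (diagonal (fun i => (d i : ℂ))).IsHermitian := by
      apply Matrix.isHermitian_diagonal_of_self_adjoint
      ext i; simp
    exact Matrix.isHermitian_mul_mul_conjTranspose U this
  have he := eigs_conj d hdm U hU1 hMh
  have hmem : U * LambdaSigma k H * star U ∈ SigmaSet n k := by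
    rw [hL]
    refine ⟨hMh, ?_, ?_⟩
    · intro i j hi hj
      rw [he]; simp [hd, hi, hj]
    · intro i j hi hj
      rw [he]
      simp only [hd, hi, if_true, hj, lt_irrefl, if_false]
      exact hge j hj.ge
  have hval : frobNorm (H - U * LambdaSigma k H * star U) =
      Real.sqrt (∑ j : Fin n, if (j : ℕ) < k then (eigs H j - lamBar k H) ^ 2 else 0) := by
    unfold frobNorm
    have h := frob_sq_diff (eigs H) d U U hU2 hU1 hU2 hU1
    rw [← hHU, ← hL, hU1] at h
    rw [h]
    congr 1
    refine Finset.sum_congr rfl fun i _ => ?_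
    rw [Finset.sum_eq_single i]
    · simp only [hd, Matrix.one_apply_eq]
      split_ifs <;> simp
    · intro j _ hj
      simp [Matrix.one_apply_ne hj.symm]
    · simp
  have hD : Real.sqrt k * Dk k H =
      Real.sqrt (∑ j : Fin n, if (j : ℕ) < k then (eigs H j - lamBar k H) ^ 2 else 0) := by
    unfold Dk
    rw [← Real.sqrt_mul hk0.le, mul_div_cancel₀ _ hk0.ne']
  have hleast : IsLeast ((fun G => frobNorm (H - G)) '' SigmaSet n k)
      (frobNorm (H - U * LambdaSigma k H * star U)) := by
    refine ⟨⟨_, hmem, rfl⟩, ?_⟩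
    rintro _ ⟨G, ⟨hG, hG1, -⟩, rfl⟩
    rw [hval]
    apply Real.sqrt_le_sqrt
    have h := hoffman (eigs H) hmono U G hU2 hU1 hG
    rw [← hHU] at h
    refine (mean_ineq (by omega) hkn (eigs H) (eigs G ⟨0, by omega⟩)).trans (le_trans ?_ h)
    refine Finset.sum_le_sum fun j _ => ?_
    split_ifs with hj
    · rw [hG1 j ⟨0, by omega⟩ hj (by simp; omega)]
    · positivity
  rw [hleast.csInf_eq]
  exact ⟨rfl, hval.trans hD.symm⟩

end
end

section
/- Let f_1,…,f_l be real-analytic functions defined in a neighborhood of 0 ∈ ℝ, not all vanishing identically near 0, and let r = min_{1≤i≤l} ord₀(f_i), a finite natural number. Then the function F(t) = (sgn t)^r · √(f_1(t)² + … + f_l(t)²) is real-analytic in a neighborhood of 0, and ord₀(F) = r. -/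
noncomputable section

/-- Order of vanishing of a function at `0 ∈ ℝ`: the smallest `j` such that the `j`-th
iterated derivative at `0` is nonzero (for an analytic function this is the smallest index
of a nonzero Taylor coefficient at `0`), and `⊤` if no such `j` exists. -/
def ord0 (f : ℝ → ℝ) : ℕ∞ :=
  sInf {m : ℕ∞ | ∃ j : ℕ, m = (j : ℕ∞) ∧ iteratedDeriv j f 0 ≠ 0}

theorem ord0_eq_analyticOrderAt {f : ℝ → ℝ} (hf : AnalyticAt ℝ f 0) :
    ord0 f = analyticOrderAt f 0 := by
  apply le_antisymm
  · refine ENat.forall_natCast_le_iff_le.mp fun n hn => ?_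
    rw [natCast_le_analyticOrderAt_iff_iteratedDeriv_eq_zero hf]
    intro i hi
    by_contra hne
    have h1 : ord0 f ≤ (i : ℕ∞) := sInf_le ⟨i, rfl, hne⟩
    have h2 : (n : ℕ∞) ≤ (i : ℕ∞) := hn.trans h1
    have h3 : n ≤ i := by exact_mod_cast h2
    omega
  · refine le_sInf ?_
    rintro _ ⟨j, rfl, hj⟩
    by_contra hlt
    rw [not_le] at hlt
    have h1 : ((j + 1 : ℕ) : ℕ∞) ≤ analyticOrderAt f 0 := by
      push_cast
      exact Order.add_one_le_of_lt hlt
    rw [natCast_le_analyticOrderAt_iff_iteratedDeriv_eq_zero hf] at h1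
    exact hj (h1 j (by omega))

theorem real_sign_mul_abs (t : ℝ) : Real.sign t * |t| = t := by
  rcases lt_trichotomy t 0 with h | h | h
  · rw [Real.sign_of_neg h, abs_of_neg h]; ring
  · simp [h]
  · rw [Real.sign_of_pos h, abs_of_pos h]; ring

/-- **Lemma (order of a signed square root of a sum of squares):** if `f_1, …, f_l` are
real-analytic near `0`, not all identically zero near `0`, and `r` is the minimum of their
orders at `0`, then `F(t) = (sgn t)^r · √(f_1(t)² + … + f_l(t)²)` is real-analytic near `0`
and has order `r` at `0`. -/
theorem order_signed_sqrt_sum_sq {l : ℕ} (f : Fin l → ℝ → ℝ)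
    (hf : ∀ i, AnalyticAt ℝ (f i) 0)
    (hnz : ∃ i, ¬ ∀ᶠ t in nhds (0 : ℝ), f i t = 0)
    (r : ℕ) (hr : (r : ℕ∞) = ⨅ i, ord0 (f i)) :
    (∃ ε > 0, AnalyticOnNhd ℝ
      (fun t => Real.sign t ^ r * Real.sqrt (∑ i, f i t ^ 2)) (Set.Ioo (-ε) ε)) ∧
    ord0 (fun t => Real.sign t ^ r * Real.sqrt (∑ i, f i t ^ 2)) = (r : ℕ∞) := by
  obtain ⟨i₁, _⟩ := hnz
  haveI : Nonempty (Fin l) := ⟨i₁⟩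
  have hle : ∀ i, (r : ℕ∞) ≤ analyticOrderAt (f i) 0 := fun i => by
    rw [← ord0_eq_analyticOrderAt (hf i), hr]; exact iInf_le _ i
  obtain ⟨i₀, hi₀⟩ : ∃ i, ord0 (f i) = ⨅ i, ord0 (f i) := ciInf_mem (fun i => ord0 (f i))
  choose g hga hg using fun i => (natCast_le_analyticOrderAt (hf i)).mp (hle i)
  have hg0 : g i₀ 0 ≠ 0 := by
    rw [← hr, ord0_eq_analyticOrderAt (hf i₀), (hf i₀).analyticOrderAt_eq_natCast] at hi₀
    obtain ⟨k, hka, hk0, hk⟩ := hi₀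
    have : g i₀ 0 = k 0 := by
      refine tendsto_nhds_unique_of_eventuallyEq (l := nhdsWithin (0 : ℝ) {0}ᶜ)
        (hga i₀).continuousAt.continuousWithinAt hka.continuousAt.continuousWithinAt ?_
      filter_upwards [self_mem_nhdsWithin, hk.filter_mono nhdsWithin_le_nhds,
        (hg i₀).filter_mono nhdsWithin_le_nhds] with z hz h1 h2
      rw [h1] at h2
      have hz' : z ≠ 0 := hz
      simp only [sub_zero, smul_eq_mul] at h2
      exact (mul_left_cancel₀ (pow_ne_zero r hz') h2).symm
    rwa [this]
  have hGpos : 0 < ∑ i, g i 0 ^ 2 :=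
    Finset.sum_pos' (fun i _ => sq_nonneg _) ⟨i₀, Finset.mem_univ _, by positivity⟩
  have hGa : AnalyticAt ℝ (fun t => ∑ i, g i t ^ 2) 0 :=
    Finset.analyticAt_fun_sum _ fun i _ => (hga i).pow 2
  have hsa : AnalyticAt ℝ (fun t => Real.sqrt (∑ i, g i t ^ 2)) 0 :=
    (ContDiffAt.sqrt hGa.contDiffAt hGpos.ne').analyticAt
  have heq : ∀ᶠ t in nhds (0 : ℝ), Real.sign t ^ r * Real.sqrt (∑ i, f i t ^ 2)
      = (t - 0) ^ r • Real.sqrt (∑ i, g i t ^ 2) := by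
    filter_upwards [Filter.eventually_all.mpr hg] with t ht
    have : ∑ i, f i t ^ 2 = (|t| ^ r) ^ 2 * ∑ i, g i t ^ 2 := by
      rw [Finset.mul_sum]
      refine Finset.sum_congr rfl fun i _ => ?_
      rw [ht i, sub_zero, smul_eq_mul, mul_pow, ← abs_pow, sq_abs]
    rw [this, Real.sqrt_mul (by positivity), Real.sqrt_sq (by positivity), ← mul_assoc,
      ← mul_pow, real_sign_mul_abs, sub_zero, smul_eq_mul]
  have hFa : AnalyticAt ℝ (fun t => Real.sign t ^ r * Real.sqrt (∑ i, f i t ^ 2)) 0 := by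
    refine AnalyticAt.congr (f := fun t => (t - 0) ^ r • Real.sqrt (∑ i, g i t ^ 2)) ?_ ?_
    · exact ((analyticAt_id.sub analyticAt_const).pow r).smul hsa
    · filter_upwards [heq] with t ht using ht.symm
  refine ⟨?_, ?_⟩
  · obtain ⟨ε, hε, h⟩ := hFa.exists_ball_analyticOnNhd
    refine ⟨ε, hε, ?_⟩
    rwa [Real.ball_eq_Ioo, zero_sub, zero_add] at h
  · rw [ord0_eq_analyticOrderAt hFa, hFa.analyticOrderAt_eq_natCast]
    exact ⟨_, hsa, (Real.sqrt_pos.mpr hGpos).ne', heq⟩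

end
end

section
/- Let f_1,…,f_k be real-analytic functions in a neighborhood of 0 ∈ ℝ such that f_1(t) ≤ f_2(t) ≤ … ≤ f_k(t) for all sufficiently small t ≥ 0, and let f̄ = (f_1 + … + f_k)/k. Then min_{1≤i<j≤k} ord₀(f_i − f_j) = min_{1≤i≤k−1} ord₀(f_i − f_{i+1}) = ord₀(f_1 − f_k) = min_{1≤i≤k} ord₀(f_i − f̄). Moreover, if this common value r is finite, then the function t ↦ (sgn t)^r · √((1/k)·Σ_{i=1}^k (f_i(t) − f̄(t))²) is real-analytic in a neighborhood of 0 and has order r at 0. -/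
noncomputable section

def VanP (n : ℕ) (h : ℝ → ℝ) : Prop :=
  ∃ g : ℝ → ℝ, AnalyticAt ℝ g 0 ∧ ∀ᶠ z in nhds (0:ℝ), h z = z ^ n * g z

theorem le_ord0_iff {h : ℝ → ℝ} (hh : AnalyticAt ℝ h 0) (n : ℕ) :
    (n : ℕ∞) ≤ ord0 h ↔ VanP n h := by
  have h1 := natCast_le_analyticOrderAt (n := n) hh
  have h2 := natCast_le_analyticOrderAt_iff_iteratedDeriv_eq_zero (n := n) hh
  have h3 : (n : ℕ∞) ≤ ord0 h ↔ ∀ i < n, iteratedDeriv i h 0 = 0 := by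
    unfold ord0
    rw [le_sInf_iff]
    constructor
    · intro H i hi
      by_contra hne
      have := H i ⟨i, rfl, hne⟩
      have : n ≤ i := by exact_mod_cast this
      omega
    · rintro H m ⟨j, rfl, hj⟩
      by_contra hlt
      have : j < n := by
        have := not_le.mp hlt
        exact_mod_cast this
      exact hj (H j this)
  rw [h3, ← h2, h1]
  simp [VanP]

theorem VanP.add {n : ℕ} {a b : ℝ → ℝ} (ha : VanP n a) (hb : VanP n b) :
    VanP n (fun t => a t + b t) := by
  obtain ⟨g, hg, hg'⟩ := ha
  obtain ⟨k, hk, hk'⟩ := hb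
  refine ⟨fun t => g t + k t, hg.add hk, ?_⟩
  filter_upwards [hg', hk'] with z h1 h2
  rw [h1, h2]; ring

theorem VanP.const_mul {n : ℕ} {a : ℝ → ℝ} (c : ℝ) (ha : VanP n a) :
    VanP n (fun t => c * a t) := by
  obtain ⟨g, hg, hg'⟩ := ha
  refine ⟨fun t => c * g t, analyticAt_const.mul hg, ?_⟩
  filter_upwards [hg'] with z h1
  rw [h1]; ring

theorem VanP.zero (n : ℕ) : VanP n (fun _ => 0) :=
  ⟨fun _ => 0, analyticAt_const, by simp⟩

theorem VanP.sum {ι : Type*} {n : ℕ} {a : ι → ℝ → ℝ} (s : Finset ι)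
    (ha : ∀ i ∈ s, VanP n (a i)) : VanP n (fun t => ∑ i ∈ s, a i t) := by
  classical
  induction s using Finset.induction_on with
  | empty => simpa using VanP.zero n
  | insert i s hi ih =>
    simp only [Finset.sum_insert hi]
    exact (ha i (by simp)).add (ih fun j hj => ha j (by simp [hj]))

theorem VanP.congr {n : ℕ} {a b : ℝ → ℝ} (ha : VanP n a) (h : ∀ t, b t = a t) : VanP n b := by
  have : b = a := funext h
  rwa [this]

theorem VanP.succ {n : ℕ} {a g : ℝ → ℝ} (hg : AnalyticAt ℝ g 0)
    (h : ∀ᶠ z in nhds (0:ℝ), a z = z ^ n * g z) (h0 : g 0 = 0) : VanP (n+1) a := by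
  have h1 : ((1:ℕ) : ℕ∞) ≤ analyticOrderAt g 0 := by
    rw [natCast_le_analyticOrderAt_iff_iteratedDeriv_eq_zero hg]
    intro i hi
    have : i = 0 := by omega
    subst this
    simpa using h0
  rw [natCast_le_analyticOrderAt hg] at h1
  obtain ⟨k, hk, hk'⟩ := h1
  refine ⟨k, hk, ?_⟩
  filter_upwards [h, hk'] with z h1 h2
  rw [h1, h2]; simp; ring

theorem VanP.mono {m n : ℕ} {a : ℝ → ℝ} (hmn : m ≤ n) (ha : VanP n a) : VanP m a := by
  obtain ⟨g, hg, hg'⟩ := ha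
  refine ⟨fun t => t ^ (n - m) * g t, (analyticAt_id.pow _).mul hg, ?_⟩
  filter_upwards [hg'] with z h1
  rw [h1, ← mul_assoc, ← pow_add]; congr 2; omega

theorem VanP.squeeze {a b : ℝ → ℝ} (haa : AnalyticAt ℝ a 0)
    (h : ∃ ε > 0, ∀ t : ℝ, 0 ≤ t → t < ε → 0 ≤ a t ∧ a t ≤ b t) :
    ∀ {n : ℕ}, VanP n b → VanP n a := by
  intro n
  induction n with
  | zero => intro _; exact ⟨a, haa, by simp⟩
  | succ n ih =>
    intro hb
    obtain ⟨g, hg, hg'⟩ := ih (hb.mono (Nat.le_succ n))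
    obtain ⟨k, hk, hk'⟩ := hb
    refine VanP.succ hg hg' ?_
    obtain ⟨ε, hε, h⟩ := h
    have hev : ∀ᶠ t in nhdsWithin (0:ℝ) (Set.Ioi 0), 0 ≤ g t ∧ g t ≤ t * k t := by
      filter_upwards [hg'.filter_mono nhdsWithin_le_nhds, hk'.filter_mono nhdsWithin_le_nhds,
        Ioo_mem_nhdsGT hε] with t h1 h2 h3
      obtain ⟨h4, h5⟩ := h t h3.1.le h3.2
      have hp : 0 < t ^ n := pow_pos h3.1 n
      rw [h1] at h4 h5
      rw [h2, pow_succ, mul_assoc] at h5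
      exact ⟨nonneg_of_mul_nonneg_right h4 hp, le_of_mul_le_mul_left h5 hp⟩
    have t1 : Filter.Tendsto g (nhdsWithin (0:ℝ) (Set.Ioi 0)) (nhds (g 0)) :=
      hg.continuousAt.tendsto.mono_left nhdsWithin_le_nhds
    have t2 : Filter.Tendsto (fun t => t * k t) (nhdsWithin (0:ℝ) (Set.Ioi 0)) (nhds (0 * k 0)) :=
      (continuousAt_id.mul hk.continuousAt).tendsto.mono_left nhdsWithin_le_nhds
    have l1 := ge_of_tendsto t1 (hev.mono fun t ht => ht.1)
    have l2 := le_of_tendsto_of_tendsto t1 t2 (hev.mono fun t ht => ht.2)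
    linarith

theorem sign_pow_mul_abs_pow (t : ℝ) (r : ℕ) : Real.sign t ^ r * |t| ^ r = t ^ r := by
  rw [← mul_pow]
  congr 1
  rcases lt_trichotomy t 0 with h | h | h
  · rw [Real.sign_of_neg h, abs_of_neg h]; ring
  · simp [h]
  · rw [Real.sign_of_pos h, abs_of_pos h]; ring

theorem final_part {k : ℕ} (hk : 0 < k) (u : Fin k → ℝ → ℝ) (r : ℕ)
    (h1 : ∀ i, VanP r (u i)) (h2 : ¬ ∀ i, VanP (r+1) (u i)) :
    (∃ ε > 0, AnalyticOnNhd ℝ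
        (fun t => Real.sign t ^ r * Real.sqrt ((∑ i : Fin k, (u i t) ^ 2) / k))
        (Set.Ioo (-ε) ε)) ∧
      ord0 (fun t => Real.sign t ^ r * Real.sqrt ((∑ i : Fin k, (u i t) ^ 2) / k)) = (r : ℕ∞) := by
  choose g hg hg' using h1
  have hkR : (0:ℝ) < k := by exact_mod_cast hk
  obtain ⟨i0, hi0⟩ : ∃ i, g i 0 ≠ 0 := by
    by_contra hcon
    push Not at hcon
    exact h2 fun i => VanP.succ (hg i) (hg' i) (hcon i)
  set F : ℝ → ℝ := fun t => Real.sign t ^ r * Real.sqrt ((∑ i : Fin k, (u i t) ^ 2) / k) with hF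
  set G : ℝ → ℝ := fun t => (∑ i : Fin k, (g i t) ^ 2) / k with hG
  have hG0 : 0 < G 0 := by
    apply div_pos _ hkR
    exact Finset.sum_pos' (fun i _ => sq_nonneg _) ⟨i0, Finset.mem_univ _, by positivity⟩
  have hGa : AnalyticAt ℝ G 0 := by
    apply AnalyticAt.div_const
    exact Finset.analyticAt_fun_sum _ fun i _ => (hg i).pow 2
  have hS : AnalyticAt ℝ (fun t => Real.sqrt (G t)) 0 :=
    (hGa.contDiffAt.sqrt hG0.ne').analyticAt
  have hFe : ∀ᶠ z in nhds (0:ℝ), F z = z ^ r * Real.sqrt (G z) := by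
    filter_upwards [Filter.eventually_all.mpr hg'] with z hz
    have : (∑ i : Fin k, (u i z) ^ 2) / k = (|z| ^ r) ^ 2 * G z := by
      simp only [hG, hz, mul_pow, ← Finset.mul_sum, mul_div_assoc]
      rw [← pow_mul, ← pow_mul, mul_comm r 2, pow_mul, pow_mul, sq_abs]
    simp only [hF]
    rw [this, Real.sqrt_mul (sq_nonneg _), Real.sqrt_sq (by positivity), ← mul_assoc,
      sign_pow_mul_abs_pow]
  have hFa : AnalyticAt ℝ F 0 :=
    ((analyticAt_id.pow r).mul hS).congr (hFe.mono fun z hz => hz.symm)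
  refine ⟨?_, ?_⟩
  · obtain ⟨ε, hε, hb⟩ := Metric.eventually_nhds_iff.mp hFa.eventually_analyticAt
    refine ⟨ε, hε, fun t ht => hb ?_⟩
    rw [Real.dist_eq, sub_zero, abs_lt]
    exact ht
  · have hup : ¬ ((r+1 : ℕ) : ℕ∞) ≤ ord0 F := by
      rw [le_ord0_iff hFa]
      rintro ⟨q, hq, hq'⟩
      have hev : ∀ᶠ t in nhdsWithin (0:ℝ) {0}ᶜ, Real.sqrt (G t) = t * q t := by
        filter_upwards [hFe.filter_mono nhdsWithin_le_nhds, hq'.filter_mono nhdsWithin_le_nhds,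
          self_mem_nhdsWithin] with t a b c
        have c : t ≠ 0 := c
        rw [a, pow_succ, mul_assoc] at b
        exact mul_left_cancel₀ (pow_ne_zero r c) b
      have t1 := hS.continuousAt.tendsto.mono_left (nhdsWithin_le_nhds (s := {0}ᶜ))
      have t2 : Filter.Tendsto (fun t => t * q t) (nhdsWithin (0:ℝ) {0}ᶜ) (nhds (0 * q 0)) :=
        (continuousAt_id.mul hq.continuousAt).tendsto.mono_left nhdsWithin_le_nhds
      have := tendsto_nhds_unique (t1.congr' hev) t2
      have h3 := Real.sqrt_pos.mpr hG0
      simp only [zero_mul] at this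
      exact h3.ne' this
    have hlo : (r : ℕ∞) ≤ ord0 F := (le_ord0_iff hFa r).mpr ⟨_, hS, hFe⟩
    refine le_antisymm ?_ hlo
    have := not_le.mp hup
    push_cast at this
    exact Order.le_of_lt_add_one this

/-- **Order of energy splitting (Theorem on the orders):** for real-analytic
`f_1 ≤ … ≤ f_k` (for small `t ≥ 0`) with mean `f̄`, the minimum order of pairwise
differences, of differences of neighbours, the order of `f_1 − f_k`, and the minimum order of
differences from the mean all coincide; and if this common value `r` is finite, the signed
standard deviation `(sgn t)^r · √((1/k)·Σ (f_i − f̄)²)` is real-analytic near `0` of order `r`. -/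
theorem order_energy_splitting {k : ℕ} (hk : 0 < k) (f : Fin k → ℝ → ℝ)
    (hf : ∀ i, AnalyticAt ℝ (f i) 0)
    (hord : ∃ ε > 0, ∀ t : ℝ, 0 ≤ t → t < ε → ∀ i j : Fin k, i ≤ j → f i t ≤ f j t) :
    ((⨅ (i : Fin k) (j : Fin k) (_ : i < j), ord0 (fun t => f i t - f j t))
        = (⨅ (i : Fin k) (j : Fin k) (_ : (j : ℕ) = (i : ℕ) + 1),
            ord0 (fun t => f i t - f j t))) ∧
    ((⨅ (i : Fin k) (j : Fin k) (_ : i < j), ord0 (fun t => f i t - f j t))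
        = ord0 (fun t => f ⟨0, hk⟩ t - f ⟨k - 1, by omega⟩ t)) ∧
    ((⨅ (i : Fin k) (j : Fin k) (_ : i < j), ord0 (fun t => f i t - f j t))
        = ⨅ i : Fin k, ord0 (fun t => f i t - (∑ m : Fin k, f m t) / k)) ∧
    ∀ r : ℕ, (r : ℕ∞) = (⨅ (i : Fin k) (j : Fin k) (_ : i < j),
        ord0 (fun t => f i t - f j t)) →
      (∃ ε > 0, AnalyticOnNhd ℝ
        (fun t => Real.sign t ^ r *
          Real.sqrt ((∑ i : Fin k, (f i t - (∑ m : Fin k, f m t) / k) ^ 2) / k))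
        (Set.Ioo (-ε) ε)) ∧
      ord0 (fun t => Real.sign t ^ r *
          Real.sqrt ((∑ i : Fin k, (f i t - (∑ m : Fin k, f m t) / k) ^ 2) / k)) = (r : ℕ∞) := by
  have hkR : (k:ℝ) ≠ 0 := by exact_mod_cast hk.ne'
  have hd : ∀ i j, AnalyticAt ℝ (fun t => f i t - f j t) 0 := fun i j => (hf i).sub (hf j)
  have hm : ∀ i, AnalyticAt ℝ (fun t => f i t - (∑ m : Fin k, f m t) / k) 0 := fun i =>
    (hf i).sub ((Finset.analyticAt_fun_sum _ fun m _ => hf m).div_const)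
  have trans : ∀ (n : ℕ) (i j l : Fin k), VanP n (fun t => f i t - f j t) →
      VanP n (fun t => f j t - f l t) → VanP n (fun t => f i t - f l t) := fun n i j l h1 h2 =>
    (h1.add h2).congr fun t => by ring
  have symm : ∀ (n : ℕ) (i j : Fin k), VanP n (fun t => f i t - f j t) →
      VanP n (fun t => f j t - f i t) := fun n i j h1 =>
    (h1.const_mul (-1)).congr fun t => by ring
  have hA : ∀ n : ℕ, (n : ℕ∞) ≤ (⨅ (i : Fin k) (j : Fin k) (_ : i < j),
      ord0 (fun t => f i t - f j t)) ↔ ∀ i j, VanP n (fun t => f i t - f j t) := by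
    intro n
    simp only [le_iInf_iff, le_ord0_iff (hd _ _)]
    constructor
    · intro H i j
      rcases lt_trichotomy i j with h | h | h
      · exact H i j h
      · subst h; exact (VanP.zero n).congr fun t => by ring
      · exact symm _ _ _ (H j i h)
    · intro H i j _; exact H i j
  have hB : ∀ n : ℕ, (n : ℕ∞) ≤ (⨅ (i : Fin k) (j : Fin k) (_ : (j : ℕ) = (i : ℕ) + 1),
      ord0 (fun t => f i t - f j t)) ↔ ∀ i j, VanP n (fun t => f i t - f j t) := by
    intro n
    simp only [le_iInf_iff, le_ord0_iff (hd _ _)]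
    constructor
    · intro H
      have key : ∀ (m : ℕ) (hm : m < k), VanP n (fun t => f ⟨0, hk⟩ t - f ⟨m, hm⟩ t) := by
        intro m
        induction m with
        | zero => intro _; exact (VanP.zero n).congr fun t => by ring
        | succ m ih =>
          intro hm
          exact trans n _ ⟨m, by omega⟩ _ (ih (by omega)) (H _ _ rfl)
      intro i j
      exact trans n _ ⟨0, hk⟩ _ (symm _ _ _ (key i i.2)) (key j j.2)
    · intro H i j _; exact H i j
  have hC : ∀ n : ℕ, (n : ℕ∞) ≤ ord0 (fun t => f ⟨0, hk⟩ t - f ⟨k - 1, by omega⟩ t)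
      ↔ ∀ i j, VanP n (fun t => f i t - f j t) := by
    intro n
    rw [le_ord0_iff (hd _ _)]
    constructor
    · intro H
      have key : ∀ j, VanP n (fun t => f j t - f ⟨0, hk⟩ t) := by
        intro j
        refine VanP.squeeze (hd _ _) ?_ (symm _ _ _ H)
        obtain ⟨ε, hε, h⟩ := hord
        refine ⟨ε, hε, fun t h0 h1 => ?_⟩
        have a := h t h0 h1 ⟨0, hk⟩ j (by simp [Fin.le_def])
        have b := h t h0 h1 j ⟨k - 1, by omega⟩ (by have := j.2; simp only [Fin.le_def]; omega)
        constructor <;> linarith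
      intro i j
      exact trans n _ ⟨0, hk⟩ _ (key i) (symm _ _ _ (key j))
    · intro H; exact H _ _
  have hD' : ∀ n : ℕ, (∀ i, VanP n (fun t => f i t - (∑ m : Fin k, f m t) / k))
      ↔ ∀ i j, VanP n (fun t => f i t - f j t) := by
    intro n
    constructor
    · intro H i j
      exact ((H i).add ((H j).const_mul (-1))).congr fun t => by ring
    · intro H i
      refine ((VanP.sum Finset.univ fun m _ => H i m).const_mul (1 / k)).congr fun t => ?_
      rw [Finset.sum_sub_distrib]
      simp only [Finset.sum_const, Finset.card_univ, Fintype.card_fin, nsmul_eq_mul]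
      field_simp
  have hD : ∀ n : ℕ, (n : ℕ∞) ≤ (⨅ i : Fin k, ord0 (fun t => f i t - (∑ m : Fin k, f m t) / k))
      ↔ ∀ i j, VanP n (fun t => f i t - f j t) := by
    intro n
    rw [← hD' n]
    simp only [le_iInf_iff, le_ord0_iff (hm _)]
  refine ⟨ENat.eq_of_forall_natCast_le_iff fun n => (hA n).trans (hB n).symm,
    ENat.eq_of_forall_natCast_le_iff fun n => (hA n).trans (hC n).symm,
    ENat.eq_of_forall_natCast_le_iff fun n => (hA n).trans (hD n).symm, ?_⟩
  intro r hr
  refine final_part hk (fun i t => f i t - (∑ m : Fin k, f m t) / k) r ?_ ?_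
  · rw [hD' r, ← hA r]; exact hr.le
  · rw [hD' (r+1), ← hA (r+1), ← hr]
    intro h
    have : r + 1 ≤ r := by exact_mod_cast h
    omega

end
end

section
/- Let 2 ≤ k < n and let H₀ ∈ Σ_k. Set r₀ = (λ_{k+1}(H₀) − λ_k(H₀))/2, half the spectral gap. Then the distance in operator 2-norm from H₀ to Σ_{[k,k+1]} equals r₀: for every G ∈ Σ_{[k,k+1]} one has ‖H₀ − G‖₂ ≥ r₀, and there exists G₀ ∈ Σ_{[k,k+1]} with ‖H₀ − G₀‖₂ = r₀. -/
open Matrix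

noncomputable section

/-- Operator 2-norm of a Hermitian matrix: the largest absolute value of an eigenvalue. -/
def op2Norm {n : ℕ} (M : Matrix (Fin n) (Fin n) ℂ) : ℝ :=
  ⨆ i : Fin n, |eigs M i|

/-- The set Σ_{[k,k+1]} of Hermitian matrices with λ_k = λ_{k+1}. -/
def SigmaPairSet (n k : ℕ) : Set (Matrix (Fin n) (Fin n) ℂ) :=
  {H | H.IsHermitian ∧ ∀ i j : Fin n, (i : ℕ) + 1 = k → (j : ℕ) = k → eigs H i = eigs H j}

/-- `u` is an orthonormal eigenbasis of `M` with eigenvalues `d`. -/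
def DiagBy {n : ℕ} (M : Matrix (Fin n) (Fin n) ℂ)
    (u : OrthonormalBasis (Fin n) ℂ (EuclideanSpace ℂ (Fin n))) (d : Fin n → ℝ) : Prop :=
  ∀ j, Matrix.toEuclideanLin M (u j) = (d j : ℂ) • u j

/-- quadratic form -/
def qf {n : ℕ} (M : Matrix (Fin n) (Fin n) ℂ) (x : EuclideanSpace ℂ (Fin n)) : ℝ :=
  (inner ℂ x (Matrix.toEuclideanLin M x)).re

lemma qf_sub {n : ℕ} (A B : Matrix (Fin n) (Fin n) ℂ) (x : EuclideanSpace ℂ (Fin n)) :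
    qf (A - B) x = qf A x - qf B x := by
  simp [qf, map_sub, inner_sub_right]

lemma qf_diag {n : ℕ} {M : Matrix (Fin n) (Fin n) ℂ}
    {u : OrthonormalBasis (Fin n) ℂ (EuclideanSpace ℂ (Fin n))} {d : Fin n → ℝ}
    (h : DiagBy M u d) (x : EuclideanSpace ℂ (Fin n)) :
    qf M x = ∑ j, d j * ‖u.repr x j‖ ^ 2 := by
  have h1 : Matrix.toEuclideanLin M x = ∑ j, (u.repr x j * (d j : ℂ)) • u j := by
    conv_lhs => rw [← u.sum_repr x]
    rw [map_sum]
    refine Finset.sum_congr rfl fun j _ => ?_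
    rw [map_smul, h j, smul_smul]
  unfold qf
  rw [h1, inner_sum, Complex.re_sum]
  refine Finset.sum_congr rfl fun j _ => ?_
  rw [inner_smul_right, ← inner_conj_symm, ← u.repr_apply_apply]
  have : u.repr x j * (d j : ℂ) * (starRingEnd ℂ) (u.repr x j)
      = ((d j * ‖u.repr x j‖ ^ 2 : ℝ) : ℂ) := by
    rw [mul_right_comm, Complex.mul_conj, Complex.normSq_eq_norm_sq]
    push_cast; ring
  rw [this, Complex.ofReal_re]

lemma norm_diag {n : ℕ} 
    (u : OrthonormalBasis (Fin n) ℂ (EuclideanSpace ℂ (Fin n))) 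
    (x : EuclideanSpace ℂ (Fin n)) :
    ‖x‖ ^ 2 = ∑ j, ‖u.repr x j‖ ^ 2 := by
  rw [← u.repr.norm_map x, EuclideanSpace.norm_sq_eq]

lemma weyl_aux {n : ℕ} {A B : Matrix (Fin n) (Fin n) ℂ}
    {u v : OrthonormalBasis (Fin n) ℂ (EuclideanSpace ℂ (Fin n))} {a b : Fin n → ℝ}
    (hA : DiagBy A u a) (hB : DiagBy B v b) (ha : Monotone a) (hb : Monotone b) (c : ℝ)
    (hc : ∀ x, qf A x ≤ qf B x + c * ‖x‖ ^ 2) (i : Fin n) : a i ≤ b i + c := by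
  let L : EuclideanSpace ℂ (Fin n) →ₗ[ℂ] ({j : Fin n // j ≠ i} → ℂ) :=
    { toFun := fun x j => if j.1 < i then u.repr x j.1 else v.repr x j.1
      map_add' := by intro x y; ext j; by_cases h : j.1 < i <;> simp [h]
      map_smul' := by intro x y; ext j; by_cases h : j.1 < i <;> simp [h] }
  have hL : LinearMap.ker L ≠ ⊥ := by
    apply LinearMap.ker_ne_bot_of_finrank_lt
    have := i.pos
    simp [Fintype.card_subtype_compl]
    omega
  obtain ⟨x, hx, hx0⟩ := (Submodule.ne_bot_iff _).1 hL
  have hx' : ∀ j : {j : Fin n // j ≠ i}, (if j.1 < i then u.repr x j.1 else v.repr x j.1) = 0 :=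
    fun j => congrFun (LinearMap.mem_ker.1 hx) j
  have hu : ∀ j, j < i → u.repr x j = 0 := fun j hj => by
    have := hx' ⟨j, hj.ne⟩
    simpa [hj] using this
  have hv : ∀ j, i < j → v.repr x j = 0 := fun j hj => by
    have := hx' ⟨j, hj.ne'⟩
    simpa [not_lt.2 hj.le] using this
  have h1 : a i * ‖x‖ ^ 2 ≤ qf A x := by
    rw [qf_diag hA, norm_diag u, Finset.mul_sum]
    refine Finset.sum_le_sum fun j _ => ?_
    rcases lt_or_ge j i with h | h
    · simp [hu j h]
    · exact mul_le_mul_of_nonneg_right (ha h) (by positivity)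
  have h2 : qf B x ≤ b i * ‖x‖ ^ 2 := by
    rw [qf_diag hB, norm_diag v, Finset.mul_sum]
    refine Finset.sum_le_sum fun j _ => ?_
    rcases lt_or_ge i j with h | h
    · simp [hv j h]
    · exact mul_le_mul_of_nonneg_right (hb h) (by positivity)
  have h3 := hc x
  have hpos : 0 < ‖x‖ ^ 2 := by have := norm_pos_iff.2 hx0; positivity
  refine le_of_mul_le_mul_right ?_ hpos
  linarith

lemma eigs_mono_s15 {n : ℕ} {M : Matrix (Fin n) (Fin n) ℂ} (h : M.IsHermitian) :
    Monotone (eigs M) := by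
  rw [eigs, dif_pos h]; exact Tuple.monotone_sort _

/-- sorted eigenbasis -/
def sbasis {n : ℕ} {M : Matrix (Fin n) (Fin n) ℂ} (h : M.IsHermitian) :
    OrthonormalBasis (Fin n) ℂ (EuclideanSpace ℂ (Fin n)) :=
  h.eigenvectorBasis.reindex (Tuple.sort h.eigenvalues).symm

lemma sbasis_diag {n : ℕ} {M : Matrix (Fin n) (Fin n) ℂ} (h : M.IsHermitian) :
    DiagBy M (sbasis h) (eigs M) := by
  intro j
  rw [eigs, dif_pos h]
  simp only [sbasis, OrthonormalBasis.reindex_apply, Equiv.symm_symm, Function.comp]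
  ext i
  have := congrFun (h.mulVec_eigenvectorBasis (Tuple.sort h.eigenvalues j)) i
  simpa [Matrix.toLpLin_apply] using this

lemma eigs_eq_s15 {n : ℕ} {M : Matrix (Fin n) (Fin n) ℂ} (h : M.IsHermitian)
    {u : OrthonormalBasis (Fin n) ℂ (EuclideanSpace ℂ (Fin n))} {d : Fin n → ℝ}
    (hd : DiagBy M u d) (hm : Monotone d) : eigs M = d := by
  ext i
  apply le_antisymm
  · simpa using weyl_aux (sbasis_diag h) hd (eigs_mono_s15 h) hm 0 (by simp) i
  · simpa using weyl_aux hd (sbasis_diag h) hm (eigs_mono_s15 h) 0 (by simp) i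

lemma abs_eigs_le {n : ℕ} (M : Matrix (Fin n) (Fin n) ℂ) (i : Fin n) : 
    |eigs M i| ≤ op2Norm M :=
  le_ciSup (f := fun i => |eigs M i|) (Set.finite_range _).bddAbove i

lemma abs_qf_le {n : ℕ} {M : Matrix (Fin n) (Fin n) ℂ} (h : M.IsHermitian)
    (x : EuclideanSpace ℂ (Fin n)) : |qf M x| ≤ op2Norm M * ‖x‖ ^ 2 := by
  rw [qf_diag (sbasis_diag h), norm_diag (sbasis h), Finset.mul_sum]
  refine (Finset.abs_sum_le_sum_abs _ _).trans (Finset.sum_le_sum fun j _ => ?_)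
  rw [abs_mul, abs_of_nonneg (sq_nonneg ‖_‖)]
  exact mul_le_mul_of_nonneg_right (abs_eigs_le M j) (by positivity)

lemma weyl {n : ℕ} {A B : Matrix (Fin n) (Fin n) ℂ} (hA : A.IsHermitian) (hB : B.IsHermitian)
    (i : Fin n) : |eigs A i - eigs B i| ≤ op2Norm (A - B) := by
  have key := fun x => abs_le.1 (abs_qf_le (hA.sub hB) x)
  simp only [qf_sub] at key
  have h1 := weyl_aux (sbasis_diag hA) (sbasis_diag hB) (eigs_mono_s15 hA) (eigs_mono_s15 hB)
    (op2Norm (A - B)) (fun x => by linarith [(key x).2]) i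
  have h2 := weyl_aux (sbasis_diag hB) (sbasis_diag hA) (eigs_mono_s15 hB) (eigs_mono_s15 hA)
    (op2Norm (A - B)) (fun x => by linarith [(key x).1]) i
  rw [abs_le]; constructor <;> linarith

lemma exists_diag {n : ℕ} (u : OrthonormalBasis (Fin n) ℂ (EuclideanSpace ℂ (Fin n)))
    (d : Fin n → ℝ) : ∃ P : Matrix (Fin n) (Fin n) ℂ, P.IsHermitian ∧ DiagBy P u d := by
  let T : EuclideanSpace ℂ (Fin n) →ₗ[ℂ] EuclideanSpace ℂ (Fin n) :=
    u.toBasis.constr ℂ (fun j => (d j : ℂ) • u j)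
  have hT : ∀ j, T (u j) = (d j : ℂ) • u j := fun j => by
    have := u.toBasis.constr_basis ℂ (fun j => (d j : ℂ) • u j) j
    simpa [T] using this
  refine ⟨Matrix.toEuclideanLin.symm T, ?_, fun j => by simpa using hT j⟩
  rw [Matrix.isHermitian_iff_isSymmetric]
  rw [LinearEquiv.apply_symm_apply]
  have hT' : ∀ x, T x = ∑ j, (u.repr x j * (d j : ℂ)) • u j := fun x => by
    conv_lhs => rw [← u.sum_repr x]
    rw [map_sum]
    refine Finset.sum_congr rfl fun j _ => ?_
    rw [map_smul, hT j, smul_smul]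
  intro x y
  rw [hT' x, hT' y, inner_sum, sum_inner]
  refine Finset.sum_congr rfl fun j _ => ?_
  rw [inner_smul_left, inner_smul_right, ← inner_conj_symm x, ← u.repr_apply_apply,
    ← u.repr_apply_apply]
  simp only [map_mul, Complex.conj_ofReal]
  ring

/-- **The operator-2-norm distance from `H₀ ∈ Σ_k` to `Σ_{[k,k+1]}` is half the spectral gap**
`r₀ = (λ_{k+1}(H₀) − λ_k(H₀))/2`: every `G ∈ Σ_{[k,k+1]}` satisfies `‖H₀ − G‖₂ ≥ r₀`, and some
`G₀ ∈ Σ_{[k,k+1]}` attains `‖H₀ − G₀‖₂ = r₀`. -/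
theorem op2_dist_to_SigmaPair {n k : ℕ} (hk2 : 2 ≤ k) (hkn : k < n)
    (H₀ : Matrix (Fin n) (Fin n) ℂ) (h₀ : H₀ ∈ SigmaSet n k) :
    (∀ G ∈ SigmaPairSet n k,
      (eigs H₀ ⟨k, hkn⟩ - eigs H₀ ⟨k - 1, by omega⟩) / 2 ≤ op2Norm (H₀ - G)) ∧
    ∃ G₀ ∈ SigmaPairSet n k,
      op2Norm (H₀ - G₀) = (eigs H₀ ⟨k, hkn⟩ - eigs H₀ ⟨k - 1, by omega⟩) / 2 := by
  obtain ⟨hH, heq, hlt⟩ := h₀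
  have hab := hlt ⟨k - 1, by omega⟩ ⟨k, hkn⟩ (by simp; omega) rfl
  constructor
  · rintro G ⟨hG, hGe⟩
    have h1 := abs_le.1 (weyl hH hG ⟨k, hkn⟩)
    have h2 := abs_le.1 (weyl hH hG ⟨k - 1, by omega⟩)
    have h3 := hGe ⟨k - 1, by omega⟩ ⟨k, hkn⟩ (by simp; omega) rfl
    linarith [h1.2, h2.1]
  · set r := (eigs H₀ ⟨k, hkn⟩ - eigs H₀ ⟨k - 1, by omega⟩) / 2 with hr
    have hr0 : 0 < r := by rw [hr]; linarith
    let e : Fin n → ℝ := fun j => if (j : ℕ) < k then -r else r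
    obtain ⟨P, hP, hPd⟩ := exists_diag (sbasis hH) e
    have hem : Monotone e := by
      intro i j hij
      have hij' : (i : ℕ) ≤ j := hij
      simp only [e]
      split_ifs <;> first | linarith | omega
    have hPe := eigs_eq_s15 hP hPd hem
    have hGd : DiagBy (H₀ - P) (sbasis hH) (fun j => eigs H₀ j - e j) := by
      intro j
      rw [map_sub, LinearMap.sub_apply, sbasis_diag hH j, hPd j, ← sub_smul]
      push_cast
      rfl
    have hGm : Monotone (fun j => eigs H₀ j - e j) := by
      intro i j hij
      have hij' : (i : ℕ) ≤ j := hij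
      have h0 := eigs_mono_s15 hH hij
      simp only [e]
      split_ifs with h1 h2 h2
      · linarith
      · have h3 := heq i ⟨k - 1, by omega⟩ h1 (by simp; omega)
        have h4 : eigs H₀ ⟨k, hkn⟩ ≤ eigs H₀ j := eigs_mono_s15 hH (by
          rw [Fin.le_def]; simp; omega)
        linarith
      · omega
      · linarith
    have hGe := eigs_eq_s15 (hH.sub hP) hGd hGm
    refine ⟨H₀ - P, ⟨hH.sub hP, ?_⟩, ?_⟩
    · intro i j hi hj
      obtain rfl : j = ⟨k, hkn⟩ := Fin.ext hj
      have hi' : i = ⟨k - 1, lt_of_le_of_lt (Nat.sub_le k 1) hkn⟩ := Fin.ext (by simp; omega)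
      rw [hi', hGe]
      have : k - 1 < k := by omega
      simp only [e, this, if_true, lt_irrefl, if_false]
      linarith
    · rw [sub_sub_cancel, op2Norm, hPe]
      haveI : Nonempty (Fin n) := ⟨⟨k, hkn⟩⟩
      have : ∀ i, |e i| = r := fun i => by
        simp only [e]
        split_ifs
        · rw [abs_neg, abs_of_pos hr0]
        · exact abs_of_pos hr0
      simp only [this, ciSup_const]

end
end
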